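/- arXiv:2003.01388 — 3 statements merged into one kernel-verified Lean document; each statement's English description precedes it below -/
import Mathlib

section
/- Let τ ∈ ℤ, m ∈ ℝ, and let w : (−π/2, π/2) → ℂ be smooth. Define u : ℍ → ℂ by u(Φ(β,σ)) = e^{imσ} w(β). Then for all (β,σ), (D^τ u)(Φ(β,σ)) = e^{imσ} · (−cos²β · w″(β) + 2iτ cos²β · w′(β) + (m² cos²β − 2τ m sin β cos β) w(β)). -/
open Complex Real

noncomputable def pdx (u : ℂ → ℂ) (z : ℂ) : ℂ := fderiv ℝ u z 1
noncomputable def pdy (u : ℂ → ℂ) (z : ℂ) : ℂ := fderiv ℝ u z Complex.I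

/-- The τ-Laplacian `D^τ u = −y²(u_xx + u_yy) + 2iτ y u_x`. -/
noncomputable def tauLap (τ : ℤ) (u : ℂ → ℂ) (z : ℂ) : ℂ :=
  -(z.im : ℂ) ^ 2 * (pdx (pdx u) z + pdy (pdy u) z)
    + 2 * Complex.I * (τ : ℂ) * (z.im : ℂ) * pdx u z

/-- Cylindrical coordinates on ℍ: `Φ(β,σ) = e^σ sin β + i e^σ cos β`. -/
noncomputable def cyl (β σ : ℝ) : ℂ :=
  ((Real.exp σ * Real.sin β : ℝ) : ℂ) + ((Real.exp σ * Real.cos β : ℝ) : ℂ) * Complex.I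

/-!
With `ζ = β + iσ` one has `Φ(β,σ) = i e^{-iζ}`, so the inverse of the cylindrical coordinates is the
holomorphic function `ζ = i log(-iz)`, with derivative `i/z = e^{-σ}(cos β + i sin β)`. The
Laplacian is conformally covariant, `Δ(F ∘ h) = |h'|² (ΔF) ∘ h` for holomorphic `h`, and the
conformal factor `e^{-2σ}` turns `y²` into `cos²β`. It remains to differentiate the product
`F(ζ) = w(β) e^{imσ}`.
-/

open InnerProductSpace Laplacian Topology

section SecondDerivatives

variable {𝕜 V E : Type*} [NontriviallyNormedField 𝕜] [NormedAddCommGroup V] [NormedSpace 𝕜 V]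
  [NormedAddCommGroup E] [NormedSpace 𝕜 E]

lemma differentiableAt_fderiv_of_contDiffAt_two {f : V → E} {x : V} (hf : ContDiffAt 𝕜 2 f x) :
    DifferentiableAt 𝕜 (fderiv 𝕜 f) x :=
  (hf.fderiv_right (m := 1) (by norm_num)).differentiableAt (by simp)

lemma differentiableAt_deriv_of_contDiffAt_two {f : 𝕜 → E} {x : 𝕜} (hf : ContDiffAt 𝕜 2 f x) :
    DifferentiableAt 𝕜 (deriv f) x :=
  (differentiableAt_fderiv_of_contDiffAt_two hf).clm_apply (differentiableAt_const 1)

lemma fderiv_fderiv_apply_const {f : V → E} {x : V} (hf : ContDiffAt 𝕜 2 f x) (v k : V) :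
    fderiv 𝕜 (fun y ↦ fderiv 𝕜 f y v) x k = fderiv 𝕜 (fderiv 𝕜 f) x k v := by
  simp [fderiv_clm_apply (differentiableAt_fderiv_of_contDiffAt_two hf) (differentiableAt_const v)]

end SecondDerivatives

section ConformalCovariance

variable {E : Type*} [NormedAddCommGroup E] [NormedSpace ℝ E]

lemma laplacian_eq_fderiv_fderiv (f : ℂ → E) (z : ℂ) :
    Δ f z = fderiv ℝ (fderiv ℝ f) z 1 1 + fderiv ℝ (fderiv ℝ f) z I I := by
  simp [laplacian_eq_iteratedFDeriv_complexPlane, iteratedFDeriv_two_apply]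

lemma bilin_self_add_bilin_I_mul_self (B : ℂ →L[ℝ] ℂ →L[ℝ] E) (a : ℂ) :
    B a a + B (I * a) (I * a) = ‖a‖ ^ 2 • (B 1 1 + B I I) := by
  have ha : a = a.re • (1 : ℂ) + a.im • I := by simp [re_add_im]
  have hIa : I * a = (-a.im) • (1 : ℂ) + a.re • I := by
    apply Complex.ext <;> simp
  rw [hIa, Complex.sq_norm, normSq_apply]
  nth_rewrite 1 2 [ha]
  simp only [map_add, map_smul, add_apply, smul_apply]
  module

lemma fderiv_comp_of_differentiableAt_complex {F : ℂ → E} {h : ℂ → ℂ} {z : ℂ}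
    (hF : DifferentiableAt ℝ F (h z)) (hh : DifferentiableAt ℂ h z) (v : ℂ) :
    fderiv ℝ (F ∘ h) z v = fderiv ℝ F (h z) (deriv h z * v) := by
  rw [fderiv_comp z hF (hh.restrictScalars ℝ), hh.fderiv_restrictScalars ℝ]
  simp [mul_comm]

lemma fderiv_fderiv_comp_of_analyticAt {F : ℂ → E} {h : ℂ → ℂ} {z : ℂ}
    (hF : ContDiffAt ℝ 2 F (h z)) (hh : AnalyticAt ℂ h z) (k v : ℂ) :
    fderiv ℝ (fderiv ℝ (F ∘ h)) z k v =
      fderiv ℝ (fderiv ℝ F) (h z) (deriv h z * k) (deriv h z * v) +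
        fderiv ℝ F (h z) (deriv (deriv h) z * k * v) := by
  have hFh : ContDiffAt ℝ 2 (F ∘ h) z := hF.comp z (hh.contDiffAt.restrict_scalars ℝ)
  have hF' : DifferentiableAt ℝ (fderiv ℝ F) (h z) :=
    differentiableAt_fderiv_of_contDiffAt_two hF
  have hh' : DifferentiableAt ℂ (deriv h) z := hh.deriv.differentiableAt
  have first_deriv : (fun ζ ↦ fderiv ℝ (F ∘ h) ζ v) =ᶠ[𝓝 z]
      fun ζ ↦ (fderiv ℝ F ∘ h) ζ (deriv h ζ * v) := by
    filter_upwards [hh.continuousAt.eventually (hF.eventually (by simp)),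
      hh.eventually_analyticAt] with ζ hFζ hhζ
    exact fderiv_comp_of_differentiableAt_complex (hFζ.differentiableAt (by simp))
      hhζ.differentiableAt v
  have hcomp : DifferentiableAt ℝ (fderiv ℝ F ∘ h) z :=
    hF'.comp z (hh.differentiableAt.restrictScalars ℝ)
  have hdir : DifferentiableAt ℂ (fun ζ ↦ deriv h ζ * v) z := hh'.mul_const v
  rw [← fderiv_fderiv_apply_const hFh, first_deriv.fderiv_eq,
    fderiv_clm_apply hcomp (hdir.restrictScalars ℝ), hdir.fderiv_restrictScalars ℝ]
  simp only [add_apply, ContinuousLinearMap.comp_apply,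
    ContinuousLinearMap.flip_apply, ContinuousLinearMap.coe_restrictScalars',
    fderiv_comp_of_differentiableAt_complex hF' hh.differentiableAt, Function.comp_apply,
    fderiv_eq_smul_deriv, deriv_mul_const_field]
  rw [add_comm, smul_eq_mul, show k * (deriv (deriv h) z * v) = deriv (deriv h) z * k * v by ring]

lemma laplacian_comp_of_analyticAt {F : ℂ → E} {h : ℂ → ℂ} {z : ℂ}
    (hF : ContDiffAt ℝ 2 F (h z)) (hh : AnalyticAt ℂ h z) :
    Δ (F ∘ h) z = ‖deriv h z‖ ^ 2 • Δ F (h z) := by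
  -- The `h''` terms in the directions `1` and `I` cancel because `I * I = -1`.
  have cancel : fderiv ℝ F (h z) (deriv (deriv h) z * I * I) =
      -fderiv ℝ F (h z) (deriv (deriv h) z * 1 * 1) := by
    rw [← map_neg, mul_assoc _ I I, I_mul_I]
    simp
  rw [laplacian_eq_fderiv_fderiv, laplacian_eq_fderiv_fderiv, ← bilin_self_add_bilin_I_mul_self,
    fderiv_fderiv_comp_of_analyticAt hF hh, fderiv_fderiv_comp_of_analyticAt hF hh, cancel,
    mul_one, mul_comm I]
  abel

end ConformalCovariance

section SeparatedVariables

variable {A : Type*} [NormedRing A] [NormedAlgebra ℝ A] {f g : ℝ → A} {z : ℂ}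

lemma contDiffAt_mul_re_im {n : WithTop ℕ∞} (hf : ContDiffAt ℝ n f z.re)
    (hg : ContDiffAt ℝ n g z.im) : ContDiffAt ℝ n (fun ζ : ℂ ↦ f ζ.re * g ζ.im) z :=
  (hf.comp z reCLM.contDiff.contDiffAt).mul (hg.comp z imCLM.contDiff.contDiffAt)

lemma fderiv_mul_re_im (hf : DifferentiableAt ℝ f z.re) (hg : DifferentiableAt ℝ g z.im) (v : ℂ) :
    fderiv ℝ (fun ζ : ℂ ↦ f ζ.re * g ζ.im) z v =
      v.re • (deriv f z.re * g z.im) + v.im • (f z.re * deriv g z.im) := by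
  have hf_re : HasFDerivAt (fun ζ : ℂ ↦ f ζ.re) _ z :=
    hf.hasDerivAt.hasFDerivAt.comp z reCLM.hasFDerivAt
  have hg_im : HasFDerivAt (fun ζ : ℂ ↦ g ζ.im) _ z :=
    hg.hasDerivAt.hasFDerivAt.comp z imCLM.hasFDerivAt
  rw [(hf_re.fun_mul' hg_im).fderiv]
  simp [add_comm]

lemma laplacian_mul_re_im (hf : ContDiffAt ℝ 2 f z.re) (hg : ContDiffAt ℝ 2 g z.im) :
    Δ (fun ζ : ℂ ↦ f ζ.re * g ζ.im) z =
      deriv (deriv f) z.re * g z.im + f z.re * deriv (deriv g) z.im := by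
  have first_deriv (v : ℂ) : (fun ζ ↦ fderiv ℝ (fun ζ : ℂ ↦ f ζ.re * g ζ.im) ζ v) =ᶠ[𝓝 z]
      fun ζ ↦ v.re • (deriv f ζ.re * g ζ.im) + v.im • (f ζ.re * deriv g ζ.im) := by
    filter_upwards [continuous_re.continuousAt.eventually (hf.eventually (by simp)),
      continuous_im.continuousAt.eventually (hg.eventually (by simp))] with ζ hfζ hgζ
    exact fderiv_mul_re_im (hfζ.differentiableAt (by simp)) (hgζ.differentiableAt (by simp)) v
  have hfg := contDiffAt_mul_re_im hf hg
  rw [laplacian_eq_fderiv_fderiv, ← fderiv_fderiv_apply_const hfg,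
    ← fderiv_fderiv_apply_const hfg, (first_deriv 1).fderiv_eq, (first_deriv I).fderiv_eq]
  simp [
    fderiv_mul_re_im (differentiableAt_deriv_of_contDiffAt_two hf) (hg.differentiableAt (by simp)),
    fderiv_mul_re_im (hf.differentiableAt (by simp)) (differentiableAt_deriv_of_contDiffAt_two hg)]

end SeparatedVariables

section CylindricalCoordinates

/-- The inverse of the cylindrical coordinates `cyl`, with `(β, σ)` encoded as the complex number
`β + iσ`. -/
noncomputable def cylInv (z : ℂ) : ℂ := I * log (-I * z)

lemma cyl_eq_I_mul_exp (β σ : ℝ) : cyl β σ = I * exp (-I * ⟨β, σ⟩) := by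
  apply Complex.ext <;> simp [cyl, exp_re, exp_im, -ofReal_sin, -ofReal_cos, -ofReal_exp]

lemma cyl_im (β σ : ℝ) : (cyl β σ).im = Real.exp σ * Real.cos β := by
  simp [cyl_eq_I_mul_exp, exp_re]

lemma cyl_im_pos {β : ℝ} (hβ : β ∈ Set.Ioo (-(π / 2)) (π / 2)) (σ : ℝ) : 0 < (cyl β σ).im := by
  rw [cyl_im]
  exact mul_pos (Real.exp_pos σ) (Real.cos_pos_of_mem_Ioo hβ)

lemma cylInv_cyl {β : ℝ} (hβ : β ∈ Set.Ico (-π) π) (σ : ℝ) : cylInv (cyl β σ) = ⟨β, σ⟩ := by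
  have hlog : log (exp (-I * ⟨β, σ⟩)) = -I * ⟨β, σ⟩ :=
    log_exp (by simpa using hβ.2) (by simpa [neg_le] using hβ.1)
  rw [cylInv, cyl_eq_I_mul_exp, ← mul_assoc, neg_mul, I_mul_I, neg_neg, one_mul, hlog,
    ← mul_assoc, mul_neg, I_mul_I, neg_neg, one_mul]

lemma cyl_cylInv {z : ℂ} (hz : z ≠ 0) : cyl (cylInv z).re (cylInv z).im = z := by
  have hlog : -I * cylInv z = log (-I * z) := by
    rw [cylInv, ← mul_assoc, neg_mul, I_mul_I, neg_neg, one_mul]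
  rw [cyl_eq_I_mul_exp, Complex.eta, hlog, exp_log (by simpa using hz), ← mul_assoc, mul_neg,
    I_mul_I, neg_neg, one_mul]

lemma cylInv_re_mem_Ioo {z : ℂ} (hz : 0 < z.im) :
    (cylInv z).re ∈ Set.Ioo (-(π / 2)) (π / 2) := by
  have harg : |arg (-I * z)| < π / 2 := abs_arg_lt_pi_div_two_iff.2 (.inl (by simpa using hz))
  rw [Set.mem_Ioo, ← abs_lt]
  simpa [cylInv, log_im] using harg

lemma neg_I_mul_mem_slitPlane {z : ℂ} (hz : 0 < z.im) : -I * z ∈ slitPlane :=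
  .inl (by simpa using hz)

lemma analyticAt_cylInv {z : ℂ} (hz : 0 < z.im) : AnalyticAt ℂ cylInv z :=
  analyticAt_const.mul ((analyticAt_const.mul analyticAt_id).clog (neg_I_mul_mem_slitPlane hz))

lemma deriv_cylInv {z : ℂ} (hz : 0 < z.im) : deriv cylInv z = I / z := by
  have hlog : HasDerivAt (fun ζ ↦ log (-I * ζ)) (-I * 1 / (-I * z)) z :=
    ((hasDerivAt_id z).const_mul (-I)).clog (neg_I_mul_mem_slitPlane hz)
  rw [mul_div_mul_left _ _ (neg_ne_zero.2 I_ne_zero)] at hlog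
  exact ((hlog.const_mul I).congr_deriv (mul_one_div I z)).deriv

lemma deriv_cylInv_cyl {β : ℝ} (hβ : β ∈ Set.Ioo (-(π / 2)) (π / 2)) (σ : ℝ) :
    deriv cylInv (cyl β σ) = Real.exp (-σ) • (⟨Real.cos β, Real.sin β⟩ : ℂ) := by
  rw [deriv_cylInv (cyl_im_pos hβ σ), cyl_eq_I_mul_exp,
    div_mul_cancel_left₀ I_ne_zero, ← Complex.exp_neg]
  apply Complex.ext <;> simp [exp_re, exp_im]

lemma norm_deriv_cylInv_cyl {β : ℝ} (hβ : β ∈ Set.Ioo (-(π / 2)) (π / 2)) (σ : ℝ) :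
    ‖deriv cylInv (cyl β σ)‖ = Real.exp (-σ) := by
  have hunit : ‖(⟨Real.cos β, Real.sin β⟩ : ℂ)‖ = 1 := by
    rw [Complex.norm_eq_sqrt_sq_add_sq, Real.cos_sq_add_sin_sq, Real.sqrt_one]
  rw [deriv_cylInv_cyl hβ, norm_smul, hunit, mul_one, Real.norm_of_nonneg (Real.exp_pos _).le]

end CylindricalCoordinates

lemma tauLap_eq_laplacian (τ : ℤ) {u : ℂ → ℂ} {z : ℂ} (hu : ContDiffAt ℝ 2 u z) :
    tauLap τ u z = -(z.im : ℂ) ^ 2 * Δ u z + 2 * I * τ * z.im * fderiv ℝ u z 1 := by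
  rw [laplacian_eq_fderiv_fderiv, ← fderiv_fderiv_apply_const hu, ← fderiv_fderiv_apply_const hu]
  rfl

lemma tauLap_congr_of_eventuallyEq (τ : ℤ) {u v : ℂ → ℂ} {z : ℂ} (huv : u =ᶠ[𝓝 z] v) :
    tauLap τ u z = tauLap τ v z := by
  have fderiv_congr (k : ℂ) : (fun ζ ↦ fderiv ℝ u ζ k) =ᶠ[𝓝 z] fun ζ ↦ fderiv ℝ v ζ k :=
    huv.fderiv.fun_comp (fun D : ℂ →L[ℝ] ℂ ↦ D k)
  have hx : pdx u =ᶠ[𝓝 z] pdx v := fderiv_congr 1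
  have hy : pdy u =ᶠ[𝓝 z] pdy v := fderiv_congr I
  have hxx : pdx (pdx u) z = pdx (pdx v) z := by rw [pdx, pdx, hx.fderiv_eq]
  have hyy : pdy (pdy u) z = pdy (pdy v) z := by rw [pdy, pdy, hy.fderiv_eq]
  rw [tauLap, tauLap, hxx, hyy, hx.eq_of_nhds]

lemma tauLap_comp_cylInv (τ : ℤ) {F : ℂ → ℂ} {β : ℝ} (hβ : β ∈ Set.Ioo (-(π / 2)) (π / 2))
    (σ : ℝ) (hF : ContDiffAt ℝ 2 F ⟨β, σ⟩) :
    tauLap τ (F ∘ cylInv) (cyl β σ) =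
      -(Real.cos β : ℂ) ^ 2 * Δ F ⟨β, σ⟩ +
        2 * I * τ * Real.cos β * fderiv ℝ F ⟨β, σ⟩ ⟨Real.cos β, Real.sin β⟩ := by
  have hz := cyl_im_pos hβ σ
  have hinv : cylInv (cyl β σ) = ⟨β, σ⟩ :=
    cylInv_cyl ⟨by linarith [hβ.1, pi_pos], by linarith [hβ.2, pi_pos]⟩ σ
  rw [← hinv] at hF
  have hFh : ContDiffAt ℝ 2 (F ∘ cylInv) (cyl β σ) :=
    hF.comp _ ((analyticAt_cylInv hz).contDiffAt.restrict_scalars ℝ)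
  have hexp : (Real.exp σ : ℂ) * Real.exp (-σ) = 1 := by
    rw [← ofReal_mul, ← Real.exp_add, add_neg_cancel, Real.exp_zero, ofReal_one]
  rw [tauLap_eq_laplacian τ hFh, laplacian_comp_of_analyticAt hF (analyticAt_cylInv hz),
    fderiv_comp_of_differentiableAt_complex (hF.differentiableAt (by simp))
      (analyticAt_cylInv hz).differentiableAt,
    norm_deriv_cylInv_cyl hβ, mul_one, deriv_cylInv_cyl hβ, map_smul, hinv, cyl_im]
  simp only [real_smul, ofReal_mul, ofReal_pow]
  linear_combination (-(Real.cos β : ℂ) ^ 2 * Δ F ⟨β, σ⟩ * (Real.exp σ * Real.exp (-σ) + 1) +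
    2 * I * τ * Real.cos β * fderiv ℝ F ⟨β, σ⟩ ⟨Real.cos β, Real.sin β⟩) * hexp

lemma deriv_cexp_const_mul_ofReal (c : ℂ) :
    deriv (fun t : ℝ ↦ exp (c * t)) = fun t : ℝ ↦ c * exp (c * t) := by
  ext t
  simpa [mul_comm] using ((ofRealCLM.hasDerivAt (x := t)).const_mul c).cexp.deriv

theorem stmt11_general (τ : ℤ) (m : ℂ) {w : ℝ → ℂ} {u : ℂ → ℂ}
    (hw : ContDiffOn ℝ 2 w (Set.Ioo (-(π / 2)) (π / 2)))
    (hu : ∀ β ∈ Set.Ioo (-(π / 2)) (π / 2), ∀ σ : ℝ, u (cyl β σ) = exp (I * m * σ) * w β)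
    {β : ℝ} (hβ : β ∈ Set.Ioo (-(π / 2)) (π / 2)) (σ : ℝ) :
    tauLap τ u (cyl β σ) =
      exp (I * m * σ) *
        (-(Real.cos β : ℂ) ^ 2 * deriv (deriv w) β + 2 * I * τ * (Real.cos β : ℂ) ^ 2 * deriv w β +
          (m ^ 2 * (Real.cos β : ℂ) ^ 2 - 2 * τ * m * Real.sin β * Real.cos β) * w β) := by
  have u_eq : u =ᶠ[𝓝 (cyl β σ)]
      (fun ζ : ℂ ↦ w ζ.re * exp (I * m * ζ.im)) ∘ cylInv := by
    filter_upwards [continuous_im.continuousAt.eventually_const_lt (cyl_im_pos hβ σ)] with z hz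
    have hz0 : z ≠ 0 := fun h ↦ by simp [h] at hz
    rw [← cyl_cylInv hz0, hu _ (cylInv_re_mem_Ioo hz), cyl_cylInv hz0, mul_comm]
    rfl
  have hwβ : ContDiffAt ℝ 2 w β := hw.contDiffAt (isOpen_Ioo.mem_nhds hβ)
  have hexp : ContDiff ℝ 2 fun t : ℝ ↦ exp (I * m * t) :=
    (contDiff_const.mul ofRealCLM.contDiff).cexp
  rw [tauLap_congr_of_eventuallyEq τ u_eq,
    tauLap_comp_cylInv τ hβ σ (contDiffAt_mul_re_im hwβ hexp.contDiffAt),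
    laplacian_mul_re_im hwβ hexp.contDiffAt,
    fderiv_mul_re_im (hwβ.differentiableAt (by simp)) (hexp.differentiable (by simp) _)]
  simp only [deriv_cexp_const_mul_ofReal, deriv_const_mul_field, real_smul]
  linear_combination (-m ^ 2 * (Real.cos β : ℂ) ^ 2 + 2 * τ * m * Real.sin β * Real.cos β) * w β *
    exp (I * m * σ) * I_sq

/-- for `u(Φ(β,σ)) = e^{imσ} w(β)` one has
`(D^τ u)(Φ(β,σ)) = e^{imσ}(−cos²β w″ + 2iτ cos²β w′ + (m² cos²β − 2τ m sin β cos β) w)`. -/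
theorem stmt11 (τ : ℤ) (m : ℝ) (w : ℝ → ℂ)
    (hw : ContDiffOn ℝ (⊤ : ℕ∞) w (Set.Ioo (-(π / 2)) (π / 2)))
    (u : ℂ → ℂ)
    (hu : ∀ β ∈ Set.Ioo (-(π / 2)) (π / 2), ∀ σ : ℝ,
      u (cyl β σ) = Complex.exp (Complex.I * (m : ℂ) * (σ : ℂ)) * w β) :
    ∀ β ∈ Set.Ioo (-(π / 2)) (π / 2), ∀ σ : ℝ,
      tauLap τ u (cyl β σ)
        = Complex.exp (Complex.I * (m : ℂ) * (σ : ℂ)) *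
            (-(((Real.cos β ^ 2 : ℝ)) : ℂ) * deriv (deriv w) β
              + 2 * Complex.I * (τ : ℂ) * ((Real.cos β ^ 2 : ℝ) : ℂ) * deriv w β
              + ((m ^ 2 * Real.cos β ^ 2
                    - 2 * (τ : ℝ) * m * Real.sin β * Real.cos β : ℝ) : ℂ) * w β) := by
  intro β hβ σ
  exact_mod_cast stmt11_general τ m (hw.of_le (by norm_cast)) hu hβ σ
end

section
/- For every B ∈ ℝ, the function η ↦ ∫₀^B arctan(η/√(t² − η² + 1)) dt is differentiable on (−1, 1), and its derivative at η equals ln(B + √(B² − η² + 1)) − (1/2) ln(1 − η²). -/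
open Real MeasureTheory intervalIntegral

/-!
For fixed `x`, the derivative of `arctan (t / √(x² - t² + 1))` in `t` simplifies to
`1 / √(x² - t² + 1)`, because the argument `u` of the arctangent satisfies
`1 + u² = (x² + 1) / (x² - t² + 1)`. Near `η ∈ (-1, 1)` this is bounded by a constant uniformly
in `x`, so one may differentiate under the integral sign; `log (x + √(x² - η² + 1))` is a
primitive in `x` of the resulting integrand.
-/

theorem hasDerivAt_arctan_div_sqrt_sub_sq {a t : ℝ} (ht : t ^ 2 < a) :
    HasDerivAt (fun t : ℝ => arctan (t / √(a - t ^ 2))) (√(a - t ^ 2))⁻¹ t := by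
  have radicand_pos : 0 < a - t ^ 2 := sub_pos.mpr ht
  have sqrt_radicand_pos : 0 < √(a - t ^ 2) := sqrt_pos.mpr radicand_pos
  have radicand_deriv : HasDerivAt (fun t : ℝ => a - t ^ 2) (-(2 * t)) t := by
    simpa using (hasDerivAt_pow 2 t).const_sub a
  refine ((hasDerivAt_id' t).fun_div
    (radicand_deriv.sqrt radicand_pos.ne') sqrt_radicand_pos.ne').arctan.congr_deriv ?_
  have sq_add_sq_ne_zero : √(a - t ^ 2) ^ 2 + t ^ 2 ≠ 0 := by positivity
  field_simp
  ring

theorem hasDerivAt_integral_arctan_div_sqrt_sub_sq {α : Type*} [MeasurableSpace α]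
    {μ : Measure α} [IsFiniteMeasure μ] {f : α → ℝ} {m η : ℝ}
    (hf : AEMeasurable f μ) (hm : ∀ᵐ x ∂μ, m ≤ f x) (hη : η ^ 2 < m) :
    HasDerivAt (fun t => ∫ x, arctan (t / √(f x - t ^ 2)) ∂μ) (∫ x, (√(f x - η ^ 2))⁻¹ ∂μ) η := by
  obtain ⟨r, hηr, hrm⟩ := exists_between hη
  have nhds_η : {t : ℝ | t ^ 2 < r} ∈ nhds η :=
    (isOpen_lt (continuous_pow 2) continuous_const).mem_nhds hηr
  have measurable_integrand (t : ℝ) :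
      AEStronglyMeasurable (fun x => arctan (t / √(f x - t ^ 2))) μ :=
    (measurable_arctan.comp_aemeasurable
      ((hf.sub_const _).sqrt.const_div t)).aestronglyMeasurable
  have integrable_integrand : Integrable (fun x => arctan (η / √(f x - η ^ 2))) μ :=
    .of_bound (measurable_integrand η) (π / 2) (.of_forall fun x =>
      abs_le.mpr ⟨(neg_pi_div_two_lt_arctan _).le, (arctan_lt_pi_div_two _).le⟩)
  have deriv_bound : ∀ᵐ x ∂μ, ∀ t ∈ {t : ℝ | t ^ 2 < r},
      ‖(√(f x - t ^ 2))⁻¹‖ ≤ (√(m - r))⁻¹ := by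
    filter_upwards [hm] with x hx t (ht : t ^ 2 < r)
    rw [norm_of_nonneg (by positivity)]
    exact inv_anti₀ (sqrt_pos.mpr (sub_pos.mpr hrm)) (sqrt_le_sqrt (by linarith))
  have hasDerivAt_integrand : ∀ᵐ x ∂μ, ∀ t ∈ {t : ℝ | t ^ 2 < r},
      HasDerivAt (fun t => arctan (t / √(f x - t ^ 2))) (√(f x - t ^ 2))⁻¹ t := by
    filter_upwards [hm] with x hx t (ht : t ^ 2 < r)
    exact hasDerivAt_arctan_div_sqrt_sub_sq (by linarith)
  exact (hasDerivAt_integral_of_dominated_loc_of_deriv_le nhds_η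
    (.of_forall measurable_integrand) integrable_integrand
    (hf.sub_const _).sqrt.inv.aestronglyMeasurable
    deriv_bound (integrable_const _) hasDerivAt_integrand).2

theorem hasDerivAt_intervalIntegral_arctan_div_sqrt_sub_sq {f : ℝ → ℝ} {a b m η : ℝ}
    (hf : AEMeasurable f (volume.restrict (Set.uIoc a b)))
    (hm : ∀ x ∈ Set.uIoc a b, m ≤ f x) (hη : η ^ 2 < m) :
    HasDerivAt (fun t => ∫ x in a..b, arctan (t / √(f x - t ^ 2)))
      (∫ x in a..b, (√(f x - η ^ 2))⁻¹) η := by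
  have : IsFiniteMeasure (volume.restrict (Set.uIoc a b)) := isFiniteMeasure_restrict_Ioc _ _
  simp only [intervalIntegral_eq_integral_uIoc]
  exact (hasDerivAt_integral_arctan_div_sqrt_sub_sq hf
    (ae_restrict_of_forall_mem measurableSet_uIoc hm) hη).fun_const_smul _

section LogAddSqrt

variable {c : ℝ}

theorem add_sqrt_sq_add_pos (hc : 0 < c) (x : ℝ) : 0 < x + √(x ^ 2 + c) :=
  neg_lt_iff_pos_add'.mp (lt_sqrt_of_sq_lt (by rw [neg_sq]; exact lt_add_of_pos_right _ hc))

theorem hasDerivAt_log_add_sqrt_sq_add (hc : 0 < c) (x : ℝ) :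
    HasDerivAt (fun x => log (x + √(x ^ 2 + c))) (√(x ^ 2 + c))⁻¹ x := by
  have radicand_pos : 0 < x ^ 2 + c := by positivity
  have add_sqrt_pos := add_sqrt_sq_add_pos hc x
  have radicand_deriv : HasDerivAt (fun x : ℝ => x ^ 2 + c) (2 * x) x := by
    simpa using (hasDerivAt_pow 2 x).add_const c
  refine (((hasDerivAt_id' x).fun_add (radicand_deriv.sqrt radicand_pos.ne')).log
    add_sqrt_pos.ne').congr_deriv ?_
  field_simp
  ring

theorem integral_inv_sqrt_sq_add (hc : 0 < c) (a b : ℝ) :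
    ∫ x in a..b, (√(x ^ 2 + c))⁻¹ = log (b + √(b ^ 2 + c)) - log (a + √(a ^ 2 + c)) := by
  have sqrt_ne_zero (x : ℝ) : √(x ^ 2 + c) ≠ 0 := by positivity
  have continuous_integrand : Continuous fun x : ℝ => (√(x ^ 2 + c))⁻¹ :=
    Continuous.inv₀ (by fun_prop) sqrt_ne_zero
  exact integral_eq_sub_of_hasDerivAt (fun x _ => hasDerivAt_log_add_sqrt_sq_add hc x)
    (continuous_integrand.intervalIntegrable a b)

end LogAddSqrt

/-- for every `B ∈ ℝ`, the function
`η ↦ ∫₀^B arctan(η/√(t² − η² + 1)) dt` is differentiable on `(−1,1)` with derivative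
`ln(B + √(B² − η² + 1)) − (1/2) ln(1 − η²)` at `η`. -/
theorem stmt15 (B : ℝ) (η : ℝ) (hη : η ∈ Set.Ioo (-1 : ℝ) 1) :
    HasDerivAt (fun t : ℝ => ∫ x in (0 : ℝ)..B, Real.arctan (t / Real.sqrt (x ^ 2 - t ^ 2 + 1)))
      (Real.log (B + Real.sqrt (B ^ 2 - η ^ 2 + 1)) - (1 / 2) * Real.log (1 - η ^ 2)) η := by
  have η_sq_lt_one : η ^ 2 < 1 := (sq_lt_one_iff_abs_lt_one η).mpr (abs_lt.mpr hη)
  have one_sub_pos : 0 < 1 - η ^ 2 := sub_pos.mpr η_sq_lt_one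
  have deriv_under_integral := hasDerivAt_intervalIntegral_arctan_div_sqrt_sub_sq
    (f := fun x => x ^ 2 + 1) (a := 0) (b := B) (by fun_prop)
    (fun x _ => le_add_of_nonneg_left (sq_nonneg x)) η_sq_lt_one
  have integral_deriv : ∫ x in (0 : ℝ)..B, (√(x ^ 2 + 1 - η ^ 2))⁻¹ =
      log (B + √(B ^ 2 + 1 - η ^ 2)) - (1 / 2) * log (1 - η ^ 2) := by
    simp only [add_sub_assoc]
    rw [integral_inv_sqrt_sq_add one_sub_pos, zero_pow two_ne_zero, zero_add, zero_add,
      log_sqrt one_sub_pos.le, div_eq_inv_mul, one_div]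
  simp only [sub_add_eq_add_sub]
  exact integral_deriv ▸ deriv_under_integral
end

section
/- Let B ∈ ℝ, let a,b,c,d ∈ ℝ with ad − bc = 1, and let γ(z) = (az+b)/(cz+d). For z = x + iy ∈ ℍ set α = Re(1/(cz+d)²) and β₀ = Im(1/(cz+d)²), and define δ(x,y,ξ₁,ξ₂) := (Re γ(z), Im γ(z), (α ξ₁ − β₀ ξ₂)/(α² + β₀²) + 2B c² y, (β₀ ξ₁ + α ξ₂)/(α² + β₀²) + 2B c(cx + d)). Then for every (x, y, vₓ, v_y) with y > 0, φ_B(δ(φ_B^{-1}(x,y,vₓ,v_y))) = (Re γ(z), Im γ(z), α vₓ − β₀ v_y, β₀ vₓ + α v_y); that is, φ_B ∘ δ ∘ φ_B^{-1} is the differential of the Möbius transformation γ acting on tangent vectors. -/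
open Complex

/-- The identification `φ_B : T*ℍ → Tℍ`, `(x,y,ξ₁,ξ₂) ↦ (x, y, y²ξ₁ − By, y²ξ₂)`. -/
noncomputable def phiB (B : ℝ) (p : ℝ × ℝ × ℝ × ℝ) : ℝ × ℝ × ℝ × ℝ :=
  (p.1, p.2.1, p.2.1 ^ 2 * p.2.2.1 - B * p.2.1, p.2.1 ^ 2 * p.2.2.2)

/-- The inverse identification `φ_B⁻¹ : Tℍ → T*ℍ`, `(x,y,vₓ,v_y) ↦ (x, y, (vₓ+By)/y², v_y/y²)`. -/
noncomputable def phiBinv (B : ℝ) (q : ℝ × ℝ × ℝ × ℝ) : ℝ × ℝ × ℝ × ℝ :=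
  (q.1, q.2.1, (q.2.2.1 + B * q.2.1) / q.2.1 ^ 2, q.2.2.2 / q.2.1 ^ 2)

/-- The point `x + iy ∈ ℂ`. -/
noncomputable def mz (x y : ℝ) : ℂ := (x : ℂ) + (y : ℂ) * Complex.I

/-- The Möbius image `γ(z) = (az+b)/(cz+d)` of `z = x + iy`. -/
noncomputable def gam (a b c d x y : ℝ) : ℂ :=
  ((a : ℂ) * mz x y + (b : ℂ)) / ((c : ℂ) * mz x y + (d : ℂ))

/-- `α = Re(1/(cz+d)²)` at `z = x+iy`. -/
noncomputable def alph (c d x y : ℝ) : ℝ := (1 / ((c : ℂ) * mz x y + (d : ℂ)) ^ 2).re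

/-- `β₀ = Im(1/(cz+d)²)` at `z = x+iy`. -/
noncomputable def bet (c d x y : ℝ) : ℝ := (1 / ((c : ℂ) * mz x y + (d : ℂ)) ^ 2).im

/-- The cotangent-bundle map δ from the Egorov-theorem computation. -/
noncomputable def deltaMap (B a b c d : ℝ) (p : ℝ × ℝ × ℝ × ℝ) : ℝ × ℝ × ℝ × ℝ :=
  ((gam a b c d p.1 p.2.1).re, (gam a b c d p.1 p.2.1).im,
    (alph c d p.1 p.2.1 * p.2.2.1 - bet c d p.1 p.2.1 * p.2.2.2) /
        (alph c d p.1 p.2.1 ^ 2 + bet c d p.1 p.2.1 ^ 2) + 2 * B * c ^ 2 * p.2.1,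
    (bet c d p.1 p.2.1 * p.2.2.1 + alph c d p.1 p.2.1 * p.2.2.2) /
        (alph c d p.1 p.2.1 ^ 2 + bet c d p.1 p.2.1 ^ 2) + 2 * B * c * (c * p.1 + d))

/-!
Write `w = cz + d` and regard covectors and tangent vectors as complex numbers. Since
`α + iβ₀ = w⁻²`, the map `δ` acts on fibres by `ξ ↦ w̄² ξ + 2iBc w̄`, while `φ_B` acts by
`ξ ↦ y² ξ - By`. As `Im γ(z) = y / |w|²`, the composition sends `v` to
`v / w² + B y (w̄ + 2icy - w) / (w² w̄)`, and the bracket vanishes because `Im w = cy`.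
-/

open scoped ComplexConjugate

/-- The fibre coordinates of a point of `T*ℍ` or `Tℍ`, read as one complex number: `ξ₁ + iξ₂` for a
covector and `vₓ + iv_y` for a tangent vector. -/
def fiberCoord (p : ℝ × ℝ × ℝ × ℝ) : ℂ := ⟨p.2.2.1, p.2.2.2⟩

/-- The denominator `cz + d` of the Möbius transformation at `z = x + iy`. -/
noncomputable def mobiusDenom (c d x y : ℝ) : ℂ := c * mz x y + d

theorem eq_of_fiberCoord_eq {p q : ℝ × ℝ × ℝ × ℝ} (hx : p.1 = q.1) (hy : p.2.1 = q.2.1)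
    (hfiber : fiberCoord p = fiberCoord q) : p = q :=
  Prod.ext hx (Prod.ext hy (Prod.ext (congrArg re hfiber) (congrArg im hfiber)))

theorem mobiusDenom_re (c d x y : ℝ) : (mobiusDenom c d x y).re = c * x + d := by
  simp [mobiusDenom, mz]

theorem mobiusDenom_im (c d x y : ℝ) : (mobiusDenom c d x y).im = c * y := by
  simp [mobiusDenom, mz]

theorem mobiusDenom_ne_zero {c d x y : ℝ} (hcd : c ≠ 0 ∨ d ≠ 0) (hy : y ≠ 0) :
    mobiusDenom c d x y ≠ 0 := by
  have him : (mz x y).im ≠ 0 := by simpa [mz] using hy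
  have hrow : ![c, d] ≠ 0 := by simpa [imp_iff_not_or] using hcd
  exact UpperHalfPlane.linear_ne_zero_of_im him hrow

theorem gam_im (a b c d x y : ℝ) :
    (gam a b c d x y).im = (a * d - b * c) * y / normSq (mobiusDenom c d x y) := by
  change (mobiusDenom a b x y / mobiusDenom c d x y).im = _
  rw [div_im, ← sub_div]
  simp only [mobiusDenom_re, mobiusDenom_im]
  ring

theorem inv_mobiusDenom_sq_eq (c d x y : ℝ) :
    (mobiusDenom c d x y ^ 2)⁻¹ = ⟨alph c d x y, bet c d x y⟩ := by
  rw [← one_div]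
  rfl

theorem fiberCoord_phiB (B : ℝ) (p : ℝ × ℝ × ℝ × ℝ) :
    fiberCoord (phiB B p) = p.2.1 ^ 2 * fiberCoord p - B * p.2.1 := by
  apply Complex.ext <;> simp [fiberCoord, phiB, ← ofReal_pow]

theorem fiberCoord_phiBinv (B : ℝ) (q : ℝ × ℝ × ℝ × ℝ) :
    fiberCoord (phiBinv B q) = (fiberCoord q + B * q.2.1) / q.2.1 ^ 2 := by
  apply Complex.ext <;> simp [fiberCoord, phiBinv, ← ofReal_pow]

theorem mul_div_normSq (u ξ : ℂ) : u * ξ / normSq u = ξ / conj u := by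
  rw [div_eq_mul_inv ξ, inv_def, conj_conj, normSq_conj, ofReal_inv]
  ring

theorem fiberCoord_deltaMap (B a b c d : ℝ) (p : ℝ × ℝ × ℝ × ℝ) :
    fiberCoord (deltaMap B a b c d p) =
      conj (mobiusDenom c d p.1 p.2.1) ^ 2 * fiberCoord p +
        2 * B * c * I * conj (mobiusDenom c d p.1 p.2.1) := by
  set w := mobiusDenom c d p.1 p.2.1 with hw
  calc fiberCoord (deltaMap B a b c d p)
      = (w ^ 2)⁻¹ * fiberCoord p / normSq (w ^ 2)⁻¹ + 2 * B * c * I * conj w := by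
        rw [hw, inv_mobiusDenom_sq_eq, normSq_mk, ← sq, ← sq]
        apply Complex.ext
        · simp [fiberCoord, deltaMap, mobiusDenom_re, mobiusDenom_im, div_ofReal_re, sq, mul_assoc,
            -ofReal_add, -ofReal_mul]
        · simp [fiberCoord, deltaMap, mobiusDenom_re, mobiusDenom_im, div_ofReal_im,
            add_comm (bet _ _ _ _ * _), -ofReal_add, -ofReal_pow]
    _ = conj w ^ 2 * fiberCoord p + 2 * B * c * I * conj w := by
        rw [mul_div_normSq, map_inv₀, map_pow, div_inv_eq_mul, mul_comm (fiberCoord p)]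

theorem conjugated_fiber_map_eq_inv_sq_mul {w : ℂ} {c y : ℝ} (hw : w ≠ 0) (hy : y ≠ 0)
    (him : w.im = c * y) (B : ℝ) (v : ℂ) :
    ((y / normSq w : ℝ) : ℂ) ^ 2 * (conj w ^ 2 * ((v + B * y) / y ^ 2) + 2 * B * c * I * conj w) -
      B * (y / normSq w : ℝ) = (w ^ 2)⁻¹ * v := by
  have hconj : conj w ≠ 0 := (map_ne_zero _).mpr hw
  have hyC : (y : ℂ) ≠ 0 := ofReal_ne_zero.mpr hy
  have hbracket : conj w + 2 * I * c * y - w = 0 := by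
    have hsub := sub_conj w
    rw [him] at hsub
    push_cast at hsub
    linear_combination -hsub
  rw [ofReal_div, ← mul_conj]
  calc _ = (w ^ 2)⁻¹ * v + B * y * (conj w + 2 * I * c * y - w) / (w ^ 2 * conj w) := by
        field_simp
        ring
    _ = (w ^ 2)⁻¹ * v := by rw [hbracket, mul_zero, zero_div, add_zero]

theorem stmt16_general (B a b c d : ℝ) (h : a * d - b * c = 1) (x y vx vy : ℝ) (hy : y ≠ 0) :
    phiB B (deltaMap B a b c d (phiBinv B (x, y, vx, vy)))
      = ((gam a b c d x y).re, (gam a b c d x y).im,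
          alph c d x y * vx - bet c d x y * vy,
          bet c d x y * vx + alph c d x y * vy) := by
  have hcd : c ≠ 0 ∨ d ≠ 0 := by
    by_contra! hzero
    simp [hzero] at h
  have hw : mobiusDenom c d x y ≠ 0 := mobiusDenom_ne_zero hcd hy
  have hbase : (gam a b c d x y).im = y / normSq (mobiusDenom c d x y) := by
    rw [gam_im, h, one_mul]
  refine eq_of_fiberCoord_eq rfl rfl ?_
  calc fiberCoord (phiB B (deltaMap B a b c d (phiBinv B (x, y, vx, vy))))
      = (mobiusDenom c d x y ^ 2)⁻¹ * ⟨vx, vy⟩ := by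
        rw [fiberCoord_phiB, fiberCoord_deltaMap, fiberCoord_phiBinv]
        simp only [deltaMap, phiBinv, hbase]
        exact conjugated_fiber_map_eq_inv_sq_mul hw hy (mobiusDenom_im c d x y) B _
    _ = ⟨alph c d x y * vx - bet c d x y * vy, bet c d x y * vx + alph c d x y * vy⟩ := by
        rw [inv_mobiusDenom_sq_eq]
        apply Complex.ext <;> simp [add_comm]

/-- `φ_B ∘ δ ∘ φ_B⁻¹` is the differential of the Möbius transformation γ
acting on tangent vectors: it sends `(x,y,vₓ,v_y)` to
`(Re γ(z), Im γ(z), α vₓ − β₀ v_y, β₀ vₓ + α v_y)`. -/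
theorem stmt16 (B a b c d : ℝ) (h : a * d - b * c = 1) (x y vx vy : ℝ) (hy : 0 < y) :
    phiB B (deltaMap B a b c d (phiBinv B (x, y, vx, vy)))
      = ((gam a b c d x y).re, (gam a b c d x y).im,
          alph c d x y * vx - bet c d x y * vy,
          bet c d x y * vx + alph c d x y * vy) :=
  stmt16_general B a b c d h x y vx vy hy.ne'
end
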